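/- Suppose F ∈ D(Λ), i.e. its quantile function Q satisfies de Haan's criterion. Then σ²(s) is regularly varying of exponent one at zero: for every λ > 0, σ²(λs)/σ²(s) → λ as s ↓ 0. -/

import Mathlib

open MeasureTheory Filter Set

noncomputable section

/-- The distribution function of a measure on `ℝ`. -/
def distFun (μ : Measure ℝ) : ℝ → ℝ := fun x => (μ (Set.Iic x)).toReal

/-- The quantile (left-continuous inverse) function of a distribution function. -/
def quantileFun (F : ℝ → ℝ) : ℝ → ℝ := fun s => sInf {x : ℝ | s ≤ F x}

/-- de Haan's criterion for the Gumbel domain of attraction, in terms of the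
quantile function `Q`. -/
def DeHaanGumbel (Q : ℝ → ℝ) : Prop :=
  ∀ x y z w : ℝ, 0 < x → 0 < y → 0 < z → 0 < w → y ≠ w →
    Tendsto (fun s : ℝ => (Q (1 - s * x) - Q (1 - s * z)) / (Q (1 - s * y) - Q (1 - s * w)))
      (nhdsWithin 0 (Set.Ioi 0))
      (nhds ((Real.log x - Real.log z) / (Real.log y - Real.log w)))

/-- The Lebesgue–Stieltjes measure `dQ` on `(0,1)` associated with the quantile function of
`F`: it coincides with the pushforward of Lebesgue measure under `F`
(for an interval `(a,b] ⊆ (0,1)` it has mass `Q(b+) - Q(a+)`). -/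
def dQ (μ : Measure ℝ) : Measure ℝ := Measure.map (distFun μ) volume

/-- `c(s,β) = s^{-β} ∫_{(1-s,1)} (1-u)^β dQ(u)`. -/
def cBeta (μ : Measure ℝ) (s β : ℝ) : ℝ :=
  s ^ (-β) * ∫ u in Set.Ioo (1 - s) 1, (1 - u) ^ β ∂(dQ μ)

/-- `c(s) = c(s,1) = s⁻¹ ∫_{(1-s,1)} (1-u) dQ(u)`. -/
def cFun (μ : Measure ℝ) (s : ℝ) : ℝ := cBeta μ s 1

/-- `σ²(s) = ∫_{(1-s,1)} ∫_{(1-s,1)} (min(u,v) - uv) dQ(u) dQ(v)`. -/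
def sigmaSq (μ : Measure ℝ) (s : ℝ) : ℝ :=
  ∫ v in Set.Ioo (1 - s) 1, (∫ u in Set.Ioo (1 - s) 1, (min u v - u * v) ∂(dQ μ)) ∂(dQ μ)

/-- A function is slowly varying at zero if `L(λ s)/L(s) → 1` as `s ↓ 0` for every `λ > 0`. -/
def SlowlyVaryingAtZero (L : ℝ → ℝ) : Prop :=
  ∀ lam : ℝ, 0 < lam →
    Tendsto (fun s : ℝ => L (lam * s) / L s) (nhdsWithin 0 (Set.Ioi 0)) (nhds 1)

/-- Condition (K) on the sequence of integers `k n`. -/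
def CondK (k : ℕ → ℕ) : Prop :=
  (∀ n : ℕ, 1 ≤ k n ∧ k n ≤ n) ∧ Tendsto k atTop atTop ∧
    Tendsto (fun n : ℕ => (k n : ℝ) / (n : ℝ)) atTop (nhds 0)


lemma distFun_eq_cdf (μ : Measure ℝ) [IsProbabilityMeasure μ] (x : ℝ) :
    distFun μ x = ProbabilityTheory.cdf μ x := by
  rw [ProbabilityTheory.cdf_eq_real]; rfl

lemma distFun_mono (μ : Measure ℝ) [IsProbabilityMeasure μ] : Monotone (distFun μ) := by
  intro x y h
  rw [distFun_eq_cdf, distFun_eq_cdf]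
  exact ProbabilityTheory.monotone_cdf μ h

lemma quantile_le_iff (μ : Measure ℝ) [IsProbabilityMeasure μ] {s x : ℝ} (h0 : 0 < s) (h1 : s < 1) :
    quantileFun (distFun μ) s ≤ x ↔ s ≤ distFun μ x := by
  have hbd : BddBelow {x : ℝ | s ≤ distFun μ x} := by
    have := (ProbabilityTheory.tendsto_cdf_atBot μ).eventually (gt_mem_nhds h0)
    obtain ⟨a, ha⟩ := this.exists
    refine ⟨a, fun y hy => ?_⟩
    by_contra hlt
    push Not at hlt
    have h2 := distFun_mono μ hlt.le
    rw [distFun_eq_cdf μ a] at h2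
    have h3 : s ≤ distFun μ y := hy
    linarith
  have hne : {x : ℝ | s ≤ distFun μ x}.Nonempty := by
    have := (ProbabilityTheory.tendsto_cdf_atTop μ).eventually (lt_mem_nhds h1)
    obtain ⟨a, ha⟩ := this.exists
    refine ⟨a, ?_⟩
    simp only [mem_setOf_eq, distFun_eq_cdf]
    exact ha.le
  constructor
  · intro h
    have hrc : ContinuousWithinAt (ProbabilityTheory.cdf μ) (Ioi x) x :=
      ((ProbabilityTheory.cdf μ).right_continuous x).mono Ioi_subset_Ici_self
    rw [distFun_eq_cdf]
    refine ge_of_tendsto hrc ?_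
    filter_upwards [self_mem_nhdsWithin] with y hy
    obtain ⟨z, hz, hzy⟩ := exists_lt_of_csInf_lt hne (lt_of_le_of_lt h hy)
    rw [← distFun_eq_cdf]
    exact le_trans hz (distFun_mono μ hzy.le)
  · intro h
    exact csInf_le hbd h

lemma quantile_mono (μ : Measure ℝ) [IsProbabilityMeasure μ] {a b : ℝ} (h0 : 0 < a) (hab : a ≤ b)
    (h1 : b < 1) : quantileFun (distFun μ) a ≤ quantileFun (distFun μ) b := by
  rw [quantile_le_iff μ h0 (hab.trans_lt h1)]
  exact hab.trans ((quantile_le_iff μ (h0.trans_le hab) h1).1 le_rfl)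

lemma dQ_Ico (μ : Measure ℝ) [IsProbabilityMeasure μ] {a b : ℝ} (h0 : 0 < a) (hab : a ≤ b)
    (h1 : b < 1) : dQ μ (Ico a b) =
      ENNReal.ofReal (quantileFun (distFun μ) b - quantileFun (distFun μ) a) := by
  rw [dQ, Measure.map_apply (distFun_mono μ).measurable measurableSet_Ico, ← Real.volume_Ico]
  congr 1
  ext x
  simp only [mem_preimage, mem_Ico]
  rw [← quantile_le_iff μ h0 (hab.trans_lt h1), ← not_le, ← quantile_le_iff μ (h0.trans_le hab) h1,
    not_le]

def LL (μ : Measure ℝ) (S : Set ℝ) : ENNReal :=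
  ∫⁻ v in S, ∫⁻ u in S, ENNReal.ofReal (min u v - u * v) ∂(dQ μ) ∂(dQ μ)

lemma LL_mono (μ : Measure ℝ) {S T : Set ℝ} (h : S ⊆ T) : LL μ S ≤ LL μ T := by
  unfold LL
  refine (lintegral_mono_set h).trans ?_
  exact lintegral_mono fun v => lintegral_mono_set h

lemma ker_nonneg {u v : ℝ} (hu : 0 ≤ u) (hu1 : u ≤ 1) (hv : 0 ≤ v) (hv1 : v ≤ 1) :
    0 ≤ min u v - u * v := by
  rcases le_total u v with h | h
  · rw [min_eq_left h]; nlinarith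
  · rw [min_eq_right h]; nlinarith

lemma sigma_eq (μ : Measure ℝ) {s : ℝ} (hs1 : s < 1)
    (h1 : ∀ v ∈ Set.Ioo (1 - s) (1:ℝ),
        IntegrableOn (fun u : ℝ => min u v - u * v) (Set.Ioo (1 - s) 1) (dQ μ))
    (h2 : IntegrableOn (fun v : ℝ => ∫ u in Set.Ioo (1 - s) 1, (min u v - u * v) ∂(dQ μ))
        (Set.Ioo (1 - s) 1) (dQ μ)) :
    ENNReal.ofReal (sigmaSq μ s) = LL μ (Ioo (1 - s) 1) := by
  have hk : ∀ v ∈ Ioo (1 - s) (1:ℝ), ∀ u ∈ Ioo (1 - s) (1:ℝ), 0 ≤ min u v - u * v := by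
    intro v hv u hu
    exact ker_nonneg (by linarith [hu.1]) hu.2.le (by linarith [hv.1]) hv.2.le
  unfold sigmaSq LL
  rw [ofReal_integral_eq_lintegral_ofReal h2]
  · refine setLIntegral_congr_fun measurableSet_Ioo fun v hv => ?_
    rw [ofReal_integral_eq_lintegral_ofReal (h1 v hv)]
    exact (ae_restrict_iff' measurableSet_Ioo).2 (ae_of_all _ fun u hu => hk v hv u hu)
  · refine (ae_restrict_iff' measurableSet_Ioo).2 (ae_of_all _ fun v hv => ?_)
    exact setIntegral_nonneg measurableSet_Ioo fun u hu => hk v hv u hu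

/-- annuli -/
def AA (θ s : ℝ) (k : ℕ) : Set ℝ := Ico (1 - θ ^ k * s) (1 - θ ^ (k + 1) * s)

lemma AA_anti {θ s : ℝ} (h0 : 0 < θ) (h1 : θ < 1) (hs : 0 < s) :
    Monotone (fun k : ℕ => 1 - θ ^ k * s) := by
  intro i j hij
  have := pow_le_pow_of_le_one h0.le h1.le hij
  have := mul_le_mul_of_nonneg_right this hs.le
  simp only; linarith

lemma AA_disj {θ s : ℝ} (h0 : 0 < θ) (h1 : θ < 1) (hs : 0 < s) :
    Pairwise (Function.onFun Disjoint (AA θ s)) :=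
  (AA_anti h0 h1 hs).pairwise_disjoint_on_Ico_succ

lemma AA_union {θ s : ℝ} (h0 : 0 < θ) (h1 : θ < 1) (hs : 0 < s) :
    (⋃ k, AA θ s k) = Ico (1 - s) 1 := by
  ext x
  simp only [mem_iUnion, AA, mem_Ico]
  constructor
  · rintro ⟨k, hk1, hk2⟩
    have h3 : θ ^ k ≤ 1 := pow_le_one₀ h0.le h1.le
    have h4 : 0 < θ ^ (k + 1) * s := by positivity
    constructor
    · nlinarith
    · linarith
  · rintro ⟨hx1, hx2⟩
    have hy : 0 < (1 - x) / s := div_pos (by linarith) hs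
    have hy1 : (1 - x) / s ≤ 1 := (div_le_one hs).2 (by linarith)
    obtain ⟨n, hn1, hn2⟩ := exists_nat_pow_near_of_lt_one hy hy1 h0 h1
    rw [lt_div_iff₀ hs] at hn1
    rw [div_le_iff₀ hs] at hn2
    exact ⟨n, by linarith, by linarith⟩

lemma AA_meas (θ s : ℝ) (k : ℕ) : MeasurableSet (AA θ s k) := measurableSet_Ico

lemma ker_bd {θ s : ℝ} (h0 : 0 < θ) (h1 : θ < 1) (hs : 0 < s) (hs1 : s < 1) {j k : ℕ} {u v : ℝ}
    (hv : v ∈ AA θ s j) (hu : u ∈ AA θ s k) :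
    s * (1 - s) * θ * θ ^ (max j k) ≤ min u v - u * v ∧ min u v - u * v ≤ s * θ ^ (max j k) := by
  have hu' : u ∈ Ico (1 - s) 1 := by rw [← AA_union h0 h1 hs]; exact mem_iUnion_of_mem k hu
  have hv' : v ∈ Ico (1 - s) 1 := by rw [← AA_union h0 h1 hs]; exact mem_iUnion_of_mem j hv
  have key : min u v - u * v = min u v * (1 - max u v) := by
    rw [mul_sub, min_mul_max]; ring
  have hmax1 : max u v ≤ 1 - θ ^ (max j k + 1) * s := by
    have hm := AA_anti (θ := θ) (s := s) h0 h1 hs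
    apply max_le
    · exact hu.2.le.trans (hm (by simp))
    · exact hv.2.le.trans (hm (by simp))
  have hmax2 : 1 - θ ^ (max j k) * s ≤ max u v := by
    rcases le_total j k with h | h
    · rw [max_eq_right h]; exact hu.1.trans (le_max_left _ _)
    · rw [max_eq_left h]; exact hv.1.trans (le_max_right _ _)
  have hmin1 : 1 - s ≤ min u v := le_min hu'.1 hv'.1
  have hmin2 : min u v ≤ 1 := (min_le_left _ _).trans hu'.2.le
  have hp : 0 < θ ^ (max j k) := by positivity
  rw [key]
  constructor
  · calc s * (1 - s) * θ * θ ^ (max j k) = (1 - s) * (θ ^ (max j k + 1) * s) := by ring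
      _ ≤ _ := by
        apply mul_le_mul hmin1 (by linarith) (by positivity) (by linarith)
  · have : 0 ≤ 1 - max u v := by
      have : 0 < θ ^ (max j k + 1) * s := by positivity
      linarith
    calc min u v * (1 - max u v) ≤ 1 * (1 - max u v) := by gcongr
      _ ≤ _ := by linarith

/-- the mass function -/
def mm (μ : Measure ℝ) (θ s : ℝ) : ℝ :=
  quantileFun (distFun μ) (1 - θ * s) - quantileFun (distFun μ) (1 - s)

lemma mm_nonneg (μ : Measure ℝ) [IsProbabilityMeasure μ] {θ s : ℝ} (h0 : 0 < θ) (h1 : θ < 1)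
    (hs : 0 < s) (hs1 : s < 1) : 0 ≤ mm μ θ s := by
  unfold mm
  have : 0 < θ * s := by positivity
  have := quantile_mono μ (a := 1 - s) (b := 1 - θ * s) (by linarith) (by nlinarith) (by linarith)
  linarith

lemma dQ_AA (μ : Measure ℝ) [IsProbabilityMeasure μ] {θ s : ℝ} (h0 : 0 < θ) (h1 : θ < 1)
    (hs : 0 < s) (hs1 : s < 1) (k : ℕ) :
    dQ μ (AA θ s k) = ENNReal.ofReal (mm μ θ (θ ^ k * s)) := by
  unfold AA mm
  have h3 : θ ^ k ≤ 1 := pow_le_one₀ h0.le h1.le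
  have h4 : 0 < θ ^ (k + 1) * s := by positivity
  have h5 : 1 - θ ^ k * s ≤ 1 - θ ^ (k + 1) * s := (AA_anti h0 h1 hs) (Nat.le_succ k)
  rw [dQ_Ico μ (by nlinarith) h5 (by linarith), show θ ^ (k + 1) * s = θ * (θ ^ k * s) by ring]

lemma LL_eq (μ : Measure ℝ) [IsProbabilityMeasure μ] {θ s : ℝ} (h0 : 0 < θ) (h1 : θ < 1)
    (hs : 0 < s) (hs1 : s < 1) :
    LL μ (Ico (1 - s) 1) = ∑' j, ∑' k, ∫⁻ v in AA θ s j, ∫⁻ u in AA θ s k,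
      ENNReal.ofReal (min u v - u * v) ∂(dQ μ) ∂(dQ μ) := by
  unfold LL
  rw [← AA_union h0 h1 hs, lintegral_iUnion (AA_meas θ s) (AA_disj h0 h1 hs)]
  congr 1
  ext j
  have : ∀ v : ℝ, ∫⁻ u in ⋃ k, AA θ s k, ENNReal.ofReal (min u v - u * v) ∂(dQ μ)
      = ∑' k, ∫⁻ u in AA θ s k, ENNReal.ofReal (min u v - u * v) ∂(dQ μ) := fun v =>
    lintegral_iUnion (AA_meas θ s) (AA_disj h0 h1 hs) _
  simp_rw [this]
  rw [lintegral_tsum]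
  intro k
  haveI : IsFiniteMeasure ((dQ μ).restrict (AA θ s k)) :=
    ⟨by simp [dQ_AA μ h0 h1 hs hs1 k]⟩
  apply Measurable.aemeasurable
  apply Measurable.lintegral_prod_right
  fun_prop

def TT (μ : Measure ℝ) (θ s : ℝ) : ℝ :=
  ∑' p : ℕ × ℕ, θ ^ (max p.1 p.2) * (mm μ θ (θ ^ p.1 * s) * mm μ θ (θ ^ p.2 * s))

lemma const_sum (μ : Measure ℝ) [IsProbabilityMeasure μ] {θ s c : ℝ} (h0 : 0 < θ) (h1 : θ < 1)
    (hs : 0 < s) (hs1 : s < 1) (hc : 0 ≤ c)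
    (hsum : Summable fun p : ℕ × ℕ =>
      θ ^ (max p.1 p.2) * (mm μ θ (θ ^ p.1 * s) * mm μ θ (θ ^ p.2 * s))) :
    ∑' j, ∑' k, ∫⁻ _v in AA θ s j, ∫⁻ _u in AA θ s k,
      ENNReal.ofReal (c * θ ^ (max j k)) ∂(dQ μ) ∂(dQ μ) = ENNReal.ofReal (c * TT μ θ s) := by
  have hm : ∀ k : ℕ, 0 ≤ mm μ θ (θ ^ k * s) := fun k =>
    mm_nonneg μ h0 h1 (by positivity) (by
      have h3 : θ ^ k ≤ 1 := pow_le_one₀ h0.le h1.le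
      nlinarith)
  unfold TT
  rw [← tsum_mul_left, ENNReal.ofReal_tsum_of_nonneg _ (hsum.mul_left c), ENNReal.tsum_prod']
  · congr 1; ext j; congr 1; ext k
    simp only [lintegral_const, Measure.restrict_apply_univ]
    rw [dQ_AA μ h0 h1 hs hs1, dQ_AA μ h0 h1 hs hs1, ← ENNReal.ofReal_mul (by positivity),
      ← ENNReal.ofReal_mul (mul_nonneg (by positivity) (hm k))]
    congr 1; ring
  · intro p
    have := hm p.1
    have := hm p.2
    positivity

lemma LL_upper (μ : Measure ℝ) [IsProbabilityMeasure μ] {θ s : ℝ} (h0 : 0 < θ) (h1 : θ < 1)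
    (hs : 0 < s) (hs1 : s < 1)
    (hsum : Summable fun p : ℕ × ℕ =>
      θ ^ (max p.1 p.2) * (mm μ θ (θ ^ p.1 * s) * mm μ θ (θ ^ p.2 * s))) :
    LL μ (Ico (1 - s) 1) ≤ ENNReal.ofReal (s * TT μ θ s) := by
  rw [← const_sum μ h0 h1 hs hs1 hs.le hsum, LL_eq μ h0 h1 hs hs1]
  refine ENNReal.tsum_le_tsum fun j => ENNReal.tsum_le_tsum fun k => ?_
  refine setLIntegral_mono' (AA_meas _ _ _) fun v hv => setLIntegral_mono' (AA_meas _ _ _) fun u hu => ?_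
  exact ENNReal.ofReal_le_ofReal (ker_bd h0 h1 hs hs1 hv hu).2

lemma LL_lower (μ : Measure ℝ) [IsProbabilityMeasure μ] {θ s : ℝ} (h0 : 0 < θ) (h1 : θ < 1)
    (hs : 0 < s) (hs1 : s < 1)
    (hsum : Summable fun p : ℕ × ℕ =>
      θ ^ (max p.1 p.2) * (mm μ θ (θ ^ p.1 * s) * mm μ θ (θ ^ p.2 * s))) :
    ENNReal.ofReal (s * (1 - s) * θ * TT μ θ s) ≤ LL μ (Ico (1 - s) 1) := by
  rw [← const_sum μ h0 h1 hs hs1 (by have : 0 < 1 - s := by linarith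
                                     positivity) hsum, LL_eq μ h0 h1 hs hs1]
  refine ENNReal.tsum_le_tsum fun j => ENNReal.tsum_le_tsum fun k => ?_
  refine setLIntegral_mono' (AA_meas _ _ _) fun v hv => setLIntegral_mono' (AA_meas _ _ _) fun u hu => ?_
  exact ENNReal.ofReal_le_ofReal (ker_bd h0 h1 hs hs1 hv hu).1

/-- ratio of masses -/
lemma mm_ratio (μ : Measure ℝ) {θ : ℝ} (h0 : 0 < θ) (h1 : θ < 1)
    (hD : DeHaanGumbel (quantileFun (distFun μ))) {c : ℝ} (hc : 0 < c) :
    Tendsto (fun s => mm μ θ (c * s) / mm μ θ s) (nhdsWithin 0 (Ioi 0)) (nhds 1) := by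
  have h := hD (θ * c) θ c 1 (by positivity) h0 hc one_pos h1.ne
  have hl : Real.log θ ≠ 0 := (Real.log_neg h0 h1).ne
  rw [Real.log_mul h0.ne' hc.ne', Real.log_one, add_sub_cancel_right, sub_zero, div_self hl] at h
  refine h.congr fun s => ?_
  unfold mm
  rw [mul_one, show s * (θ * c) = θ * (c * s) by ring, show s * c = c * s by ring,
    show s * θ = θ * s by ring]

lemma mm_pos (μ : Measure ℝ) [IsProbabilityMeasure μ] {θ : ℝ} (h0 : 0 < θ) (h1 : θ < 1)
    (hD : DeHaanGumbel (quantileFun (distFun μ))) :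
    ∀ᶠ s in nhdsWithin (0:ℝ) (Ioi 0), 0 < mm μ θ s := by
  have h := (mm_ratio μ h0 h1 hD one_pos).eventually (lt_mem_nhds one_half_lt_one)
  have h3 : ∀ᶠ s in nhdsWithin (0:ℝ) (Ioi 0), s < 1 :=
    (gt_mem_nhds one_pos).filter_mono nhdsWithin_le_nhds
  filter_upwards [h, self_mem_nhdsWithin, h3] with s hs hs0 hs1
  refine lt_of_le_of_ne (mm_nonneg μ h0 h1 hs0 hs1) fun he => ?_
  rw [← he] at hs
  norm_num at hs

/-- Potter bound -/
lemma potter (μ : Measure ℝ) [IsProbabilityMeasure μ] {θ r : ℝ} (h0 : 0 < θ) (h1 : θ < 1)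
    (hr : 1 < r) (hD : DeHaanGumbel (quantileFun (distFun μ))) :
    ∀ᶠ s in nhdsWithin (0:ℝ) (Ioi 0), ∀ k : ℕ,
      0 < mm μ θ (θ ^ k * s) ∧ mm μ θ (θ ^ k * s) ≤ r ^ k * mm μ θ s := by
  have h := ((mm_ratio μ h0 h1 hD h0).eventually (gt_mem_nhds hr)).and (mm_pos μ h0 h1 hD)
  rw [eventually_nhdsWithin_iff, Metric.eventually_nhds_iff] at h
  obtain ⟨ε, hε, h⟩ := h
  have h3 : ∀ᶠ s in nhdsWithin (0:ℝ) (Ioi 0), s < ε :=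
    (gt_mem_nhds hε).filter_mono nhdsWithin_le_nhds
  filter_upwards [self_mem_nhdsWithin, h3] with s hs hsε
  have hs' : 0 < s := hs
  have key : ∀ k : ℕ, mm μ θ (θ * (θ ^ k * s)) / mm μ θ (θ ^ k * s) < r ∧ 0 < mm μ θ (θ ^ k * s) := by
    intro k
    have h5 : 0 < θ ^ k * s := by positivity
    refine h ?_ h5
    rw [Real.dist_eq, sub_zero, abs_of_pos h5]
    have h4 : θ ^ k ≤ 1 := pow_le_one₀ h0.le h1.le
    nlinarith
  intro k
  refine ⟨(key k).2, ?_⟩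
  induction k with
  | zero => simp
  | succ k ih =>
    have h6 := (key k).1
    rw [div_lt_iff₀ (key k).2] at h6
    calc mm μ θ (θ ^ (k + 1) * s) = mm μ θ (θ * (θ ^ k * s)) := by congr 1; ring
      _ ≤ r * mm μ θ (θ ^ k * s) := h6.le
      _ ≤ r * (r ^ k * mm μ θ s) := by gcongr
      _ = _ := by ring

lemma term_bd (μ : Measure ℝ) [IsProbabilityMeasure μ] {τ : ℝ} (h0 : 0 < τ) (h1 : τ < 1)
    (hD : DeHaanGumbel (quantileFun (distFun μ))) :
    ∀ᶠ s in nhdsWithin (0:ℝ) (Ioi 0), ∀ p : ℕ × ℕ,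
      0 < (τ ^ 4) ^ (max p.1 p.2) *
        (mm μ (τ ^ 4) ((τ ^ 4) ^ p.1 * s) * mm μ (τ ^ 4) ((τ ^ 4) ^ p.2 * s)) ∧
      (τ ^ 4) ^ (max p.1 p.2) *
        (mm μ (τ ^ 4) ((τ ^ 4) ^ p.1 * s) * mm μ (τ ^ 4) ((τ ^ 4) ^ p.2 * s)) ≤
        τ ^ p.1 * τ ^ p.2 * mm μ (τ ^ 4) s ^ 2 := by
  have hθ : τ ^ 4 < 1 := pow_lt_one₀ h0.le h1 (by norm_num)
  filter_upwards [potter μ (pow_pos h0 4) hθ ((one_lt_inv₀ h0).2 h1) hD] with s hs p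
  obtain ⟨a1, a2⟩ := hs p.1
  obtain ⟨b1, b2⟩ := hs p.2
  refine ⟨by positivity, ?_⟩
  have hm : 0 < mm μ (τ ^ 4) s := by simpa using (hs 0).1
  have e : (τ ^ 4) ^ (max p.1 p.2) ≤ τ ^ (2 * p.1) * τ ^ (2 * p.2) := by
    rw [← pow_mul, ← pow_add]
    exact pow_le_pow_of_le_one h0.le h1.le (by grind)
  calc _ ≤ (τ ^ (2 * p.1) * τ ^ (2 * p.2)) * ((τ⁻¹ ^ p.1 * mm μ (τ ^ 4) s) * (τ⁻¹ ^ p.2 * mm μ (τ ^ 4) s)) := by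
        gcongr
    _ = _ := by
        rw [inv_pow, inv_pow, pow_mul', pow_mul']
        field_simp

lemma summ_tau {τ : ℝ} (h0 : 0 < τ) (h1 : τ < 1) :
    Summable fun p : ℕ × ℕ => τ ^ p.1 * τ ^ p.2 :=
  (summable_geometric_of_lt_one h0.le h1).mul_of_nonneg (summable_geometric_of_lt_one h0.le h1)
    (fun _ => by positivity) (fun _ => by positivity)

lemma TT_summable (μ : Measure ℝ) [IsProbabilityMeasure μ] {τ : ℝ} (h0 : 0 < τ) (h1 : τ < 1)
    (hD : DeHaanGumbel (quantileFun (distFun μ))) :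
    ∀ᶠ s in nhdsWithin (0:ℝ) (Ioi 0), Summable fun p : ℕ × ℕ =>
      (τ ^ 4) ^ (max p.1 p.2) *
        (mm μ (τ ^ 4) ((τ ^ 4) ^ p.1 * s) * mm μ (τ ^ 4) ((τ ^ 4) ^ p.2 * s)) := by
  filter_upwards [term_bd μ h0 h1 hD] with s hs
  exact Summable.of_nonneg_of_le (fun p => (hs p).1.le) (fun p => (hs p).2)
    ((summ_tau h0 h1).mul_right _)

lemma TT_lim (μ : Measure ℝ) [IsProbabilityMeasure μ] {τ : ℝ} (h0 : 0 < τ) (h1 : τ < 1)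
    (hD : DeHaanGumbel (quantileFun (distFun μ))) :
    Tendsto (fun s => TT μ (τ ^ 4) s / mm μ (τ ^ 4) s ^ 2) (nhdsWithin 0 (Ioi 0))
      (nhds (∑' p : ℕ × ℕ, (τ ^ 4) ^ (max p.1 p.2))) := by
  have hθ : τ ^ 4 < 1 := pow_lt_one₀ h0.le h1 (by norm_num)
  have hθ0 := pow_pos h0 4
  unfold TT
  simp_rw [← tsum_div_const]
  refine tendsto_tsum_of_dominated_convergence (summ_tau h0 h1) ?_ ?_
  · intro p
    have a := mm_ratio μ hθ0 hθ hD (pow_pos hθ0 p.1)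
    have b := mm_ratio μ hθ0 hθ hD (pow_pos hθ0 p.2)
    have := (a.mul b).const_mul ((τ ^ 4) ^ (max p.1 p.2))
    rw [mul_one, mul_one] at this
    refine this.congr fun s => ?_
    ring
  · filter_upwards [term_bd μ h0 h1 hD, mm_pos μ hθ0 hθ hD] with s hs hm p
    rw [Real.norm_eq_abs, abs_of_nonneg (div_nonneg (hs p).1.le (sq_nonneg _)),
      div_le_iff₀ (by positivity)]
    exact (hs p).2

lemma scale_tendsto {c : ℝ} (hc : 0 < c) :
    Tendsto (fun s : ℝ => c * s) (nhdsWithin 0 (Ioi 0)) (nhdsWithin 0 (Ioi 0)) := by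
  refine tendsto_nhdsWithin_iff.2 ⟨?_, ?_⟩
  · have : Tendsto (fun s : ℝ => c * s) (nhds 0) (nhds (c * 0)) :=
      (continuous_const_mul c).tendsto 0
    rw [mul_zero] at this
    exact this.mono_left nhdsWithin_le_nhds
  · filter_upwards [self_mem_nhdsWithin] with s hs
    exact mul_pos hc hs

lemma TT_ratio (μ : Measure ℝ) [IsProbabilityMeasure μ] {τ : ℝ} (h0 : 0 < τ) (h1 : τ < 1)
    (hD : DeHaanGumbel (quantileFun (distFun μ))) {c d : ℝ} (hc : 0 < c) (hd : 0 < d) :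
    Tendsto (fun s => TT μ (τ ^ 4) (c * s) / TT μ (τ ^ 4) (d * s)) (nhdsWithin 0 (Ioi 0))
      (nhds 1) := by
  have hθ : τ ^ 4 < 1 := pow_lt_one₀ h0.le h1 (by norm_num)
  have hθ0 := pow_pos h0 4
  have hS : (∑' p : ℕ × ℕ, (τ ^ 4) ^ (max p.1 p.2)) ≠ 0 := by
    refine ne_of_gt (Summable.tsum_pos ?_ (fun p => by positivity) (0, 0) (by positivity))
    refine Summable.of_nonneg_of_le (fun p => by positivity) (fun p => ?_) (summ_tau h0 h1)
    rw [← pow_mul, ← pow_add]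
    exact pow_le_pow_of_le_one h0.le h1.le (by grind)
  have hT := TT_lim μ h0 h1 hD
  have a := (hT.comp (scale_tendsto hc)).div (hT.comp (scale_tendsto hd)) hS
  have b := (((mm_ratio μ hθ0 hθ hD hc).div (mm_ratio μ hθ0 hθ hD hd) one_ne_zero).pow 2)
  have ab := a.mul b
  rw [div_self hS, div_one, one_pow, mul_one] at ab
  refine ab.congr' ?_
  have hp := mm_pos μ hθ0 hθ hD
  filter_upwards [hp, (scale_tendsto hc).eventually hp, (scale_tendsto hd).eventually hp] with s h1 h2 h3
  simp only [Pi.div_apply, Function.comp_apply]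
  generalize mm μ (τ ^ 4) (c * s) = A at *
  generalize mm μ (τ ^ 4) (d * s) = B at *
  generalize TT μ (τ ^ 4) (c * s) = C at *
  generalize TT μ (τ ^ 4) (d * s) = D at *
  field_simp

lemma sigma_bounds (μ : Measure ℝ) [IsProbabilityMeasure μ] {τ : ℝ} (h0 : 0 < τ) (h1 : τ < 1)
    (hD : DeHaanGumbel (quantileFun (distFun μ)))
    (hfin : ∀ᶠ s in nhdsWithin (0:ℝ) (Set.Ioi 0),
      (∀ v ∈ Set.Ioo (1 - s) (1:ℝ),
        IntegrableOn (fun u : ℝ => min u v - u * v) (Set.Ioo (1 - s) 1) (dQ μ)) ∧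
      IntegrableOn (fun v : ℝ => ∫ u in Set.Ioo (1 - s) 1, (min u v - u * v) ∂(dQ μ))
        (Set.Ioo (1 - s) 1) (dQ μ) ∧
      0 < sigmaSq μ s) :
    ∀ᶠ s in nhdsWithin (0:ℝ) (Set.Ioi 0), 0 < s ∧ s < 1 ∧ 0 < TT μ (τ ^ 4) s ∧
      0 < TT μ (τ ^ 4) (τ ^ 4 * s) ∧
      τ ^ 8 * s * (1 - s) * TT μ (τ ^ 4) (τ ^ 4 * s) ≤ sigmaSq μ s ∧
      sigmaSq μ s ≤ s * TT μ (τ ^ 4) s := by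
  have hθ : τ ^ 4 < 1 := pow_lt_one₀ h0.le h1 (by norm_num)
  have hθ0 := pow_pos h0 4
  have h3 : ∀ᶠ s in nhdsWithin (0:ℝ) (Ioi 0), s < 1 :=
    (gt_mem_nhds one_pos).filter_mono nhdsWithin_le_nhds
  have hsm := TT_summable μ h0 h1 hD
  have hpos : ∀ᶠ s in nhdsWithin (0:ℝ) (Set.Ioi 0), 0 < TT μ (τ ^ 4) s := by
    filter_upwards [term_bd μ h0 h1 hD, hsm] with s a b
    exact b.tsum_pos (fun p => (a p).1.le) (0, 0) (a _).1
  filter_upwards [hfin, h3, self_mem_nhdsWithin, hsm, (scale_tendsto hθ0).eventually hsm,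
    hpos, (scale_tendsto hθ0).eventually hpos] with s hf hs1 hs a b p1 p2
  have hs : 0 < s := hs
  have e := sigma_eq μ hs1 hf.1 hf.2.1
  have hts : 0 < τ ^ 4 * s := by positivity
  have hts1 : τ ^ 4 * s < s := by nlinarith
  refine ⟨hs, hs1, p1, p2, ?_, ?_⟩
  · have l := LL_lower μ hθ0 hθ hts (hts1.trans hs1) b
    have l2 := l.trans (LL_mono μ (T := Ioo (1 - s) 1) fun x hx => ⟨by linarith [hx.1], hx.2⟩)
    rw [← e, ENNReal.ofReal_le_ofReal_iff hf.2.2.le] at l2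
    refine le_trans ?_ l2
    calc τ ^ 8 * s * (1 - s) * TT μ (τ ^ 4) (τ ^ 4 * s)
        ≤ τ ^ 8 * s * (1 - τ ^ 4 * s) * TT μ (τ ^ 4) (τ ^ 4 * s) := by gcongr
      _ = _ := by ring
  · have l := (LL_mono μ (S := Ioo (1 - s) 1) Ioo_subset_Ico_self).trans
      (LL_upper μ hθ0 hθ hs hs1 a)
    rwa [← e, ENNReal.ofReal_le_ofReal_iff (by positivity)] at l

lemma exists_tau {P : ℝ → ℝ} (hP : ContinuousAt P 1) {a : ℝ} : 
    (P 1 < a → ∃ τ, 0 < τ ∧ τ < 1 ∧ P τ < a) ∧ (a < P 1 → ∃ τ, 0 < τ ∧ τ < 1 ∧ a < P τ) := by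
  have hev : ∀ᶠ t in nhdsWithin (1:ℝ) (Iio 1), 0 < t :=
    (lt_mem_nhds one_pos).filter_mono nhdsWithin_le_nhds
  have hP' : Tendsto P (nhdsWithin (1:ℝ) (Iio 1)) (nhds (P 1)) := hP.mono_left nhdsWithin_le_nhds
  constructor
  · intro h
    obtain ⟨t, x, y, z⟩ := (hev.and ((hP'.eventually (gt_mem_nhds h)).and self_mem_nhdsWithin)).exists
    exact ⟨t, x, z, y⟩
  · intro h
    obtain ⟨t, x, y, z⟩ := (hev.and ((hP'.eventually (lt_mem_nhds h)).and self_mem_nhdsWithin)).exists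
    exact ⟨t, x, z, y⟩

/-- If `F ∈ D(Λ)` then `σ²` is regularly varying of exponent one at
zero: `σ²(λs)/σ²(s) → λ` as `s ↓ 0` for every `λ > 0`. -/
theorem sigmaSq_regularly_varying
    (μ : Measure ℝ) [IsProbabilityMeasure μ] (F Q : ℝ → ℝ)
    (hF : F = distFun μ) (hQ : Q = quantileFun F)
    (hD : DeHaanGumbel Q)
    (hfin : ∀ᶠ s in nhdsWithin (0:ℝ) (Set.Ioi 0),
      (∀ v ∈ Set.Ioo (1 - s) (1:ℝ),
        IntegrableOn (fun u : ℝ => min u v - u * v) (Set.Ioo (1 - s) 1) (dQ μ)) ∧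
      IntegrableOn (fun v : ℝ => ∫ u in Set.Ioo (1 - s) 1, (min u v - u * v) ∂(dQ μ))
        (Set.Ioo (1 - s) 1) (dQ μ) ∧
      0 < sigmaSq μ s)
 :
    ∀ lam : ℝ, 0 < lam →
      Tendsto (fun s : ℝ => sigmaSq μ (lam * s) / sigmaSq μ s)
        (nhdsWithin 0 (Set.Ioi 0)) (nhds lam) := by
  subst hF
  subst hQ
  intro lam hlam
  have lin : ∀ c : ℝ, Tendsto (fun s : ℝ => 1 - c * s) (nhdsWithin 0 (Ioi 0)) (nhds 1) := by
    intro c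
    have : Tendsto (fun s : ℝ => 1 - c * s) (nhds 0) (nhds (1 - c * 0)) :=
      Continuous.tendsto (by fun_prop) 0
    rw [mul_zero, sub_zero] at this
    exact this.mono_left nhdsWithin_le_nhds
  rw [tendsto_order]
  constructor
  · intro a ha
    obtain ⟨τ, h0, h1, hlt⟩ := (exists_tau (P := fun t => t ^ 8 * lam) (by fun_prop) (a := a)).2
      (by simpa using ha)
    have hB := sigma_bounds μ h0 h1 hD hfin
    have t1 := TT_ratio μ h0 h1 hD (c := τ ^ 4 * lam) (d := 1) (by positivity) one_pos
    have t2 := ((lin lam).mul t1).const_mul (τ ^ 8 * lam)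
    rw [mul_one, mul_one] at t2
    filter_upwards [hB, (scale_tendsto hlam).eventually hB, t2.eventually (lt_mem_nhds hlt), hfin] with s b1 b2 b3 b4
    refine b3.trans_le ?_
    rw [le_div_iff₀ b4.2.2]
    have hT := b1.2.2.1
    have hT2 := b2.2.2.2.1
    have hl := b2.2.1
    have hs := b1.1
    rw [one_mul]
    rw [← mul_assoc] at hT2
    have hnn : 0 ≤ τ ^ 8 * lam * ((1 - lam * s) * (TT μ (τ ^ 4) (τ ^ 4 * lam * s) / TT μ (τ ^ 4) s)) := by
      have : 0 < 1 - lam * s := by linarith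
      positivity
    calc _ ≤ τ ^ 8 * lam * ((1 - lam * s) * (TT μ (τ ^ 4) (τ ^ 4 * lam * s) / TT μ (τ ^ 4) s)) *
          (s * TT μ (τ ^ 4) s) := mul_le_mul_of_nonneg_left b1.2.2.2.2.2 hnn
      _ = τ ^ 8 * (lam * s) * (1 - lam * s) * TT μ (τ ^ 4) (τ ^ 4 * (lam * s)) := by
          rw [← mul_assoc (τ ^ 4)]
          field_simp
      _ ≤ _ := b2.2.2.2.2.1
  · intro a ha
    obtain ⟨τ, h0, h1, hlt⟩ := (exists_tau (P := fun t => lam / t ^ 8) (by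
      apply ContinuousAt.div <;> first | fun_prop | norm_num) (a := a)).1
      (by simpa using ha)
    have hB := sigma_bounds μ h0 h1 hD hfin
    have t1 := TT_ratio μ h0 h1 hD (c := lam) (d := τ ^ 4) hlam (by positivity)
    have t2 := (t1.div (lin 1) one_ne_zero).const_mul (lam / τ ^ 8)
    rw [div_one, mul_one] at t2
    filter_upwards [hB, (scale_tendsto hlam).eventually hB, t2.eventually (gt_mem_nhds hlt), hfin] with s b1 b2 b3 b4
    refine lt_of_le_of_lt ?_ b3
    rw [div_le_iff₀ b4.2.2]
    have hT := b1.2.2.2.1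
    have hT2 := b2.2.2.1
    have hs := b1.1
    have h1s : 0 < 1 - s := by linarith [b1.2.1]
    simp only [Pi.div_apply, one_mul]
    calc _ ≤ lam * s * TT μ (τ ^ 4) (lam * s) := b2.2.2.2.2.2
      _ = lam / τ ^ 8 * (TT μ (τ ^ 4) (lam * s) / TT μ (τ ^ 4) (τ ^ 4 * s) / (1 - s)) *
          (τ ^ 8 * s * (1 - s) * TT μ (τ ^ 4) (τ ^ 4 * s)) := by
          generalize TT μ (τ ^ 4) (τ ^ 4 * s) = D at *
          field_simp
      _ ≤ _ := mul_le_mul_of_nonneg_left b1.2.2.2.2.1 (by positivity)
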